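/- arXiv:1305.7212 — 2 statements merged into one kernel-verified Lean document; each statement's English description precedes it below -/
import Mathlib

section
/- There exists a density measure μ and a set A ⊆ ℕ with μ(2A) ≠ (1/2)·μ(A), where 2A = {2a : a ∈ A}. Concretely, let A = ⋃_{i=1}^{∞} {2^{2^i}, …, 2·2^{2^i} − 1}, let ℱ be any free ultrafilter on ℕ containing {2^{2^i} : i ∈ ℕ}, let 2ℱ be the ultrafilter with base {2F : F ∈ ℱ}, and let μ(X) = 2·((2ℱ)-lim X(n)/n) − (ℱ-lim X(n)/n); then μ(A) = 1 and μ(2A) = 0. In particular, property (b) of Šalát and Tijdeman (if lim_{n→∞} A(n)/B(tn) = 1 then μ(A) = t·μ(B)) fails for some density measure. -/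
open Filter Topology

/-- The counting function `A(n) = |A ∩ [1, n]|`, as a real number. -/
noncomputable def count (A : Set ℕ) (n : ℕ) : ℝ :=
  ((A ∩ Set.Icc 1 n).ncard : ℝ)

/-- `A ⊆ ℕ` has asymptotic density `a`, i.e. `A(n)/n → a`. -/
def HasDensity (A : Set ℕ) (a : ℝ) : Prop :=
  Filter.Tendsto (fun n : ℕ => count A n / n) Filter.atTop (nhds a)

/-- Membership of a permutation `π` of `ℕ` in the Lévy group `𝒢`:
`|{k : k ≤ n < π(k)}| / n → 0`. -/
def InLevyGroup (π : Equiv.Perm ℕ) : Prop :=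
  Filter.Tendsto
    (fun n : ℕ => (({k : ℕ | k ≤ n ∧ n < π k}.ncard : ℝ) / n))
    Filter.atTop (nhds 0)

/-- A finitely additive probability measure defined on all subsets of `ℕ`,
with values in `[0, 1]`. -/
def IsFAMeasure (μ : Set ℕ → ℝ) : Prop :=
  (∀ A : Set ℕ, 0 ≤ μ A) ∧ (∀ A : Set ℕ, μ A ≤ 1) ∧ μ Set.univ = 1 ∧
    ∀ A B : Set ℕ, Disjoint A B → μ (A ∪ B) = μ A + μ B

/-- A density measure: a finitely additive measure extending asymptotic density. -/
def IsDensityMeasure (μ : Set ℕ → ℝ) : Prop :=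
  IsFAMeasure μ ∧ ∀ (A : Set ℕ) (a : ℝ), HasDensity A a → μ A = a

/-- Statistical convergence of a real sequence `x` to `L`: for every `ε > 0`
the set `{n : |x n − L| ≥ ε}` has asymptotic density zero. -/
def StatTendsto (x : ℕ → ℝ) (L : ℝ) : Prop :=
  ∀ ε : ℝ, 0 < ε → HasDensity {n : ℕ | ε ≤ |x n - L|} 0

/-- The limit of a (bounded) real sequence along an ultrafilter on `ℕ`. -/
noncomputable def ulim (𝒰 : Ultrafilter ℕ) (x : ℕ → ℝ) : ℝ :=
  limUnder (𝒰 : Filter ℕ) x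

/-- The set `A = ⋃_{i=1}^∞ {2^(2^i), …, 2·2^(2^i) − 1}`. -/
def Aex : Set ℕ := {m : ℕ | ∃ i : ℕ, 1 ≤ i ∧ 2 ^ 2 ^ i ≤ m ∧ m < 2 * 2 ^ 2 ^ i}

/-- Blümlinger's density measure `μ(X) = 2·((2ℱ)-lim X(n)/n) − (ℱ-lim X(n)/n)`. -/
noncomputable def muEx (𝒰 𝒱 : Ultrafilter ℕ) (X : Set ℕ) : ℝ :=
  2 * ulim 𝒱 (fun n : ℕ => count X n / n) - ulim 𝒰 (fun n : ℕ => count X n / n)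

lemma count_div_mem_Icc (X : Set ℕ) (n : ℕ) : count X n / n ∈ Set.Icc (0 : ℝ) 1 := by
  have h : (X ∩ Set.Icc 1 n).ncard ≤ n := by
    simpa using Set.ncard_le_ncard (Set.inter_subset_right (s := X)) (Set.finite_Icc 1 n)
  refine ⟨div_nonneg (Nat.cast_nonneg _) (Nat.cast_nonneg _),
    div_le_one_of_le₀ ?_ (Nat.cast_nonneg _)⟩
  exact Nat.cast_le.2 h

lemma tendsto_ulim_of_mem_Icc (𝒰 : Ultrafilter ℕ) {x : ℕ → ℝ} {a b : ℝ}
    (hx : ∀ n, x n ∈ Set.Icc a b) : Tendsto x 𝒰 (𝓝 (ulim 𝒰 x)) := by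
  obtain ⟨l, -, hl⟩ := isCompact_Icc.ultrafilter_le_nhds (𝒰.map x)
    (le_principal_iff.2 (Ultrafilter.mem_map.2 (Filter.univ_mem' hx)))
  exact tendsto_nhds_limUnder ⟨l, hl⟩

lemma count_two_mul_sub_count (X : Set ℕ) (n : ℕ) :
    count X (2 * n) - count X n = ((X ∩ Set.Ioc n (2 * n)).ncard : ℝ) := by
  have hunion : X ∩ Set.Icc 1 (2 * n) = (X ∩ Set.Icc 1 n) ∪ (X ∩ Set.Ioc n (2 * n)) := by
    ext k
    simp only [Set.mem_inter_iff, Set.mem_Icc, Set.mem_Ioc, Set.mem_union]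
    grind
  have hdisj : Disjoint (X ∩ Set.Icc 1 n) (X ∩ Set.Ioc n (2 * n)) := by
    refine Set.disjoint_left.2 fun k hk hk' => ?_
    exact absurd hk.2.2 (not_le.2 hk'.2.1)
  rw [count, count, hunion, Set.ncard_union_eq hdisj ((Set.finite_Icc _ _).inter_of_right _)
    ((Set.finite_Ioc _ _).inter_of_right _)]
  push_cast
  ring

lemma ultrafilter_eq_map_two_mul {𝒰 𝒱 : Ultrafilter ℕ}
    (h𝒱 : ∀ B : Set ℕ, B ∈ 𝒱 ↔ ∃ F ∈ 𝒰, (fun k : ℕ => 2 * k) '' F ⊆ B) :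
    (𝒱 : Filter ℕ) = Filter.map (fun k : ℕ => 2 * k) (𝒰 : Filter ℕ) := by
  ext B
  rw [Filter.mem_map_iff_exists_image]
  exact h𝒱 B

/-- The measure `μ(X)` is the limit along `ℱ` of the relative frequency of `X` in `(n, 2n]`. -/
lemma tendsto_muEx {𝒰 𝒱 : Ultrafilter ℕ}
    (hmap : (𝒱 : Filter ℕ) = Filter.map (fun k : ℕ => 2 * k) (𝒰 : Filter ℕ)) (X : Set ℕ) :
    Tendsto (fun n : ℕ => ((X ∩ Set.Ioc n (2 * n)).ncard : ℝ) / n) 𝒰 (𝓝 (muEx 𝒰 𝒱 X)) := by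
  have h𝒰 := tendsto_ulim_of_mem_Icc 𝒰 (count_div_mem_Icc X)
  have h𝒱 := tendsto_ulim_of_mem_Icc 𝒱 (count_div_mem_Icc X)
  nth_rewrite 1 [hmap] at h𝒱
  refine ((tendsto_map'_iff.1 h𝒱).const_mul 2 |>.sub h𝒰).congr fun n => ?_
  simp only [Function.comp_apply]
  rw [← count_two_mul_sub_count, sub_div]
  push_cast
  rw [mul_div_assoc', mul_div_mul_left _ _ two_ne_zero]

lemma ncard_inter_Ioc_two_mul_le (X : Set ℕ) (n : ℕ) : (X ∩ Set.Ioc n (2 * n)).ncard ≤ n := by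
  refine (Set.ncard_le_ncard Set.inter_subset_right (Set.finite_Ioc _ _)).trans ?_
  simp [two_mul]

theorem isDensityMeasure_muEx {𝒰 𝒱 : Ultrafilter ℕ} (hfree : (𝒰 : Filter ℕ) ≤ Filter.cofinite)
    (hmap : (𝒱 : Filter ℕ) = Filter.map (fun k : ℕ => 2 * k) (𝒰 : Filter ℕ)) :
    IsDensityMeasure (muEx 𝒰 𝒱) := by
  have hat : (𝒰 : Filter ℕ) ≤ atTop := Nat.cofinite_eq_atTop ▸ hfree
  have hat' : (𝒱 : Filter ℕ) ≤ atTop := by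
    rw [hmap]
    exact (tendsto_id.const_mul_atTop' two_pos).mono_left hat
  have hdens (X : Set ℕ) (a : ℝ) (h : HasDensity X a) : muEx 𝒰 𝒱 X = a := by
    rw [muEx, ulim, ulim, (h.mono_left hat).limUnder_eq, (h.mono_left hat').limUnder_eq]
    ring
  refine ⟨⟨fun X => ?_, fun X => ?_, ?_, fun X Y hXY => ?_⟩, hdens⟩
  · exact ge_of_tendsto' (tendsto_muEx hmap X) fun n => by positivity
  · refine le_of_tendsto' (tendsto_muEx hmap X) fun n => ?_
    exact div_le_one_of_le₀ (Nat.cast_le.2 (ncard_inter_Ioc_two_mul_le X n)) (Nat.cast_nonneg _)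
  · refine hdens _ _ (tendsto_const_nhds.congr' ?_)
    filter_upwards [eventually_gt_atTop 0] with n hn
    have : (n : ℝ) ≠ 0 := by positivity
    simp [count, this]
  · refine tendsto_nhds_unique (tendsto_muEx hmap (X ∪ Y))
      (((tendsto_muEx hmap X).add (tendsto_muEx hmap Y)).congr fun n => ?_)
    rw [Set.union_inter_distrib_right, Set.ncard_union_eq
      (hXY.mono Set.inter_subset_left Set.inter_subset_left)
      ((Set.finite_Ioc _ _).inter_of_right _) ((Set.finite_Ioc _ _).inter_of_right _)]
    push_cast
    ring

lemma le_ncard_Aex_inter_Ioc {i : ℕ} (hi : 1 ≤ i) :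
    2 ^ 2 ^ i ≤ (Aex ∩ Set.Ioc (2 ^ 2 ^ i) (2 * 2 ^ 2 ^ i)).ncard + 1 := by
  have hsub : Set.Ioo (2 ^ 2 ^ i) (2 * 2 ^ 2 ^ i) ⊆ Aex ∩ Set.Ioc (2 ^ 2 ^ i) (2 * 2 ^ 2 ^ i) :=
    fun k hk => ⟨⟨i, hi, hk.1.le, hk.2⟩, hk.1, hk.2.le⟩
  have hle := Set.ncard_le_ncard hsub ((Set.finite_Ioc _ _).inter_of_right _)
  have hcard : (Set.Ioo (2 ^ 2 ^ i) (2 * 2 ^ 2 ^ i)).ncard = 2 * 2 ^ 2 ^ i - 2 ^ 2 ^ i - 1 := by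
    simp
  omega

/-- Blocks of `Aex` preceding `2 ^ 2 ^ i` end at or below half of it. -/
lemma four_mul_two_pow_two_pow_le {i j : ℕ} (hj : 1 ≤ j) (hij : j < i) :
    4 * 2 ^ 2 ^ j ≤ 2 ^ 2 ^ i := by
  have h2 : 2 ^ 1 ≤ 2 ^ j := Nat.pow_le_pow_right two_pos hj
  have h3 : 2 ^ (j + 1) ≤ 2 ^ i := Nat.pow_le_pow_right two_pos hij
  calc 4 * 2 ^ 2 ^ j = 2 ^ (2 + 2 ^ j) := by rw [pow_add]; norm_num
    _ ≤ 2 ^ 2 ^ i := Nat.pow_le_pow_right two_pos (by rw [pow_succ] at h3; omega)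

lemma ncard_two_mul_Aex_inter_Ioc_le_one (i : ℕ) :
    (((fun k : ℕ => 2 * k) '' Aex) ∩ Set.Ioc (2 ^ 2 ^ i) (2 * 2 ^ 2 ^ i)).ncard ≤ 1 := by
  have hsub : ((fun k : ℕ => 2 * k) '' Aex) ∩ Set.Ioc (2 ^ 2 ^ i) (2 * 2 ^ 2 ^ i) ⊆
      {2 * 2 ^ 2 ^ i} := by
    rintro _ ⟨⟨a, ⟨j, hj, hja, haj⟩, rfl⟩, hlt, hle⟩
    simp only [Set.mem_singleton_iff] at hlt hle ⊢
    rcases lt_trichotomy j i with hij | rfl | hij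
    · have := four_mul_two_pow_two_pow_le hj hij
      omega
    · omega
    · have : 2 ^ 2 ^ i < 2 ^ 2 ^ j :=
        Nat.pow_lt_pow_right one_lt_two (Nat.pow_lt_pow_right one_lt_two hij)
      omega
  simpa using Set.ncard_le_ncard hsub (Set.finite_singleton _)

/-- With `ℱ` a free ultrafilter containing `{2^(2^i) : i ≥ 1}` and `2ℱ` the
ultrafilter with base `{2F : F ∈ ℱ}`, the density measure
`μ(X) = 2·((2ℱ)-lim X(n)/n) − (ℱ-lim X(n)/n)` satisfies `μ(A) = 1` and
`μ(2A) = 0`; in particular `μ(2A) ≠ (1/2)·μ(A)`. -/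
theorem salat_tijdeman_property_b_counterexample (𝒰 𝒱 : Ultrafilter ℕ)
    (hfree : (𝒰 : Filter ℕ) ≤ Filter.cofinite)
    (hmem : {n : ℕ | ∃ i : ℕ, 1 ≤ i ∧ n = 2 ^ 2 ^ i} ∈ 𝒰)
    (h𝒱 : ∀ B : Set ℕ, B ∈ 𝒱 ↔ ∃ F ∈ 𝒰, (fun k : ℕ => 2 * k) '' F ⊆ B) :
    IsDensityMeasure (muEx 𝒰 𝒱) ∧
      muEx 𝒰 𝒱 Aex = 1 ∧
      muEx 𝒰 𝒱 ((fun k : ℕ => 2 * k) '' Aex) = 0 ∧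
      muEx 𝒰 𝒱 ((fun k : ℕ => 2 * k) '' Aex) ≠ (1 / 2) * muEx 𝒰 𝒱 Aex := by
  have hmap := ultrafilter_eq_map_two_mul h𝒱
  have hμ := isDensityMeasure_muEx hfree hmap
  have hinv : Tendsto (fun n : ℕ => (1 : ℝ) / n) 𝒰 (𝓝 0) :=
    tendsto_one_div_atTop_nhds_zero_nat.mono_left (Nat.cofinite_eq_atTop ▸ hfree)
  have hA : muEx 𝒰 𝒱 Aex = 1 := by
    refine le_antisymm (hμ.1.2.1 _) ?_
    have hsum := (tendsto_muEx hmap Aex).add hinv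
    rw [add_zero] at hsum
    refine ge_of_tendsto hsum ?_
    filter_upwards [hmem] with n hn
    obtain ⟨i, hi, rfl⟩ := hn
    rw [← add_div, one_le_div (by positivity)]
    exact_mod_cast le_ncard_Aex_inter_Ioc hi
  have h2A : muEx 𝒰 𝒱 ((fun k : ℕ => 2 * k) '' Aex) = 0 := by
    refine le_antisymm (le_of_tendsto_of_tendsto (tendsto_muEx hmap _) hinv ?_) (hμ.1.1 _)
    filter_upwards [hmem] with n hn
    obtain ⟨i, -, rfl⟩ := hn
    gcongr
    exact_mod_cast ncard_two_mul_Aex_inter_Ioc_le_one i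
  refine ⟨hμ, hA, h2A, ?_⟩
  rw [hA, h2A]
  norm_num
end

section
/- There exist a density measure μ and sets A, B ⊆ ℕ with A(n) ≤ B(n) for all n ∈ ℕ, yet μ(A) > μ(B). (In general: if a density measure μ and a set A satisfy d̄(A) < μ(A), then choosing a set B having asymptotic density d(B) ∈ (d̄(A), μ(A)) and modifying finitely many elements yields such a monotonicity counterexample; this answers question (a) of Šalát and Tijdeman in the negative.) -/
open Filter Topology

lemma finite_inter_Icc_one (S : Set ℕ) (n : ℕ) : (S ∩ Set.Icc 1 n).Finite :=
  (Set.finite_Icc 1 n).subset Set.inter_subset_right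

lemma count_union {S T : Set ℕ} (h : Disjoint S T) (n : ℕ) :
    count (S ∪ T) n = count S n + count T n := by
  unfold count
  rw [Set.union_inter_distrib_right, Set.ncard_union_eq
    (h.mono Set.inter_subset_left Set.inter_subset_left)
    (finite_inter_Icc_one S n) (finite_inter_Icc_one T n)]
  push_cast
  rfl

lemma count_sub_count (S : Set ℕ) {a b : ℕ} (h : a ≤ b) :
    count S b - count S a = ((S ∩ Set.Ioc a b).ncard : ℝ) := by
  have hsplit : S ∩ Set.Icc 1 b = (S ∩ Set.Icc 1 a) ∪ (S ∩ Set.Ioc a b) := by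
    ext x
    simp only [Set.mem_inter_iff, Set.mem_Icc, Set.mem_union, Set.mem_Ioc]
    by_cases hx : x ∈ S
    · simp only [hx, true_and]
      omega
    · simp [hx]
  have hdisj : Disjoint (S ∩ Set.Icc 1 a) (S ∩ Set.Ioc a b) := by
    rw [Set.disjoint_left]
    rintro x ⟨-, hx⟩ ⟨-, hx'⟩
    exact absurd hx.2 (not_le.mpr hx'.1)
  unfold count
  rw [hsplit, Set.ncard_union_eq hdisj (finite_inter_Icc_one S a)
    ((Set.finite_Ioc a b).subset Set.inter_subset_right)]
  push_cast
  ring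

/-- The proportion of the window `(2 * 3 ^ k, 3 * 3 ^ k]` occupied by `S`. -/
noncomputable def windowMean (S : Set ℕ) (k : ℕ) : ℝ :=
  (count S (3 * 3 ^ k) - count S (2 * 3 ^ k)) / 3 ^ k

lemma windowMean_eq (S : Set ℕ) (k : ℕ) :
    windowMean S k = ((S ∩ Set.Ioc (2 * 3 ^ k) (3 * 3 ^ k)).ncard : ℝ) / 3 ^ k := by
  rw [windowMean, count_sub_count S (by gcongr; norm_num)]

lemma windowMean_of_window_subset {S : Set ℕ} {k : ℕ}
    (h : Set.Ioc (2 * 3 ^ k) (3 * 3 ^ k) ⊆ S) : windowMean S k = 1 := by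
  have hcard : (Set.Ioc (2 * 3 ^ k) (3 * 3 ^ k)).ncard = 3 ^ k := by
    rw [← Finset.coe_Ioc, Set.ncard_coe_finset, Nat.card_Ioc]
    omega
  rw [windowMean_eq, Set.inter_eq_self_of_subset_right h, hcard]
  push_cast
  exact div_self (by positivity)

lemma windowMean_of_disjoint_window {S : Set ℕ} {k : ℕ}
    (h : Disjoint S (Set.Ioc (2 * 3 ^ k) (3 * 3 ^ k))) : windowMean S k = 0 := by
  rw [windowMean_eq, h.inter_eq]
  simp

lemma windowMean_mem_Icc (S : Set ℕ) (k : ℕ) : windowMean S k ∈ Set.Icc (0 : ℝ) 1 := by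
  constructor
  · rw [windowMean_eq]
    positivity
  · rw [← windowMean_of_window_subset (Set.subset_univ (Set.Ioc (2 * 3 ^ k) (3 * 3 ^ k))),
      windowMean_eq, windowMean_eq]
    gcongr
    · exact (Set.finite_Ioc _ _).subset Set.inter_subset_right
    · exact Set.subset_univ S

lemma windowMean_union {S T : Set ℕ} (h : Disjoint S T) (k : ℕ) :
    windowMean (S ∪ T) k = windowMean S k + windowMean T k := by
  simp only [windowMean, count_union h]
  ring

lemma HasDensity.tendsto_windowMean {S : Set ℕ} {a : ℝ} (h : HasDensity S a) :
    Tendsto (windowMean S) atTop (𝓝 a) := by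
  have hpow : Tendsto (fun k : ℕ => 3 ^ k) atTop (atTop : Filter ℕ) :=
    tendsto_pow_atTop_atTop_of_one_lt (by norm_num)
  have h3 := h.comp (hpow.const_mul_atTop' (r := 3) (by norm_num))
  have h2 := h.comp (hpow.const_mul_atTop' (r := 2) (by norm_num))
  have hlim := (h3.const_mul 3).sub (h2.const_mul 2)
  rw [show 3 * a - 2 * a = a by ring] at hlim
  refine hlim.congr fun k => ?_
  simp only [Function.comp_apply, windowMean]
  push_cast
  field_simp

/-- Limits of window means along a nonprincipal ultrafilter form a density measure. -/
lemma exists_densityMeasure_tendsto_windowMean :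
    ∃ μ : Set ℕ → ℝ, IsDensityMeasure μ ∧
      ∀ S, Tendsto (windowMean S) (hyperfilter ℕ) (𝓝 (μ S)) := by
  have hlim (S : Set ℕ) : ∃ l ∈ Set.Icc (0 : ℝ) 1,
      Tendsto (windowMean S) (hyperfilter ℕ) (𝓝 l) :=
    isCompact_Icc.ultrafilter_le_nhds' ((hyperfilter ℕ).map (windowMean S))
      (Filter.mem_map.mpr (Filter.Eventually.of_forall (windowMean_mem_Icc S)))
  choose μ hμ hμ_lim using hlim
  refine ⟨μ, ⟨⟨fun S => (hμ S).1, fun S => (hμ S).2, ?_, fun S T hST => ?_⟩,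
    fun S a hS => ?_⟩, hμ_lim⟩
  · refine tendsto_nhds_unique (hμ_lim Set.univ) (tendsto_const_nhds.congr fun k => ?_)
    exact (windowMean_of_window_subset (Set.subset_univ _)).symm
  · refine tendsto_nhds_unique (hμ_lim _) (((hμ_lim S).add (hμ_lim T)).congr fun k => ?_)
    exact (windowMean_union hST k).symm
  · exact tendsto_nhds_unique (hμ_lim S)
      (hS.tendsto_windowMean.mono_left Nat.hyperfilter_le_atTop)

/-- The integers in some `(3 ^ k, 2 * 3 ^ k]`. -/
def lowerTriadic : Set ℕ := {n | ∃ k, 3 ^ k < n ∧ n ≤ 2 * 3 ^ k}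

/-- The integers in some `(2 * 3 ^ k, 3 * 3 ^ k]`. -/
def upperTriadic : Set ℕ := {n | ∃ k, 2 * 3 ^ k < n ∧ n ≤ 3 * 3 ^ k}

lemma triadic_exponent_le {j k n : ℕ} (hj : 3 ^ j < n) (hk : n ≤ 3 * 3 ^ k) : j ≤ k := by
  rw [← pow_succ'] at hk
  exact Nat.lt_succ_iff.mp ((Nat.pow_lt_pow_iff_right (by norm_num)).mp (hj.trans_le hk))

lemma disjoint_lowerTriadic_window (k : ℕ) :
    Disjoint lowerTriadic (Set.Ioc (2 * 3 ^ k) (3 * 3 ^ k)) := by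
  rw [Set.disjoint_left]
  rintro n ⟨j, hj, hj'⟩ ⟨hk, hk'⟩
  have hjk : 3 ^ j ≤ 3 ^ k := Nat.pow_le_pow_right (by norm_num) (triadic_exponent_le hj hk')
  omega

lemma count_upperTriadic_le (n : ℕ) : count upperTriadic n ≤ count lowerTriadic n := by
  have hmem : ∀ a ∈ upperTriadic, ∃ k, 2 * 3 ^ k < a ∧ a ≤ 3 * 3 ^ k := fun _ ha => ha
  choose! e he using hmem
  unfold count
  refine Nat.cast_le.mpr (Set.ncard_le_ncard_of_injOn (fun a => a - 3 ^ e a) ?_ ?_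
    (finite_inter_Icc_one _ _))
  · rintro a ⟨ha, ha'⟩
    have h := he a ha
    have hn := ha'.2
    refine ⟨⟨e a, ?_, ?_⟩, ?_, ?_⟩ <;> omega
  · rintro a ⟨ha, -⟩ b ⟨hb, -⟩ hab
    have h := he a ha
    have h' := he b hb
    dsimp only at hab
    have hle : e a ≤ e b :=
      triadic_exponent_le (n := a - 3 ^ e a) (by omega) (by omega)
    have hge : e b ≤ e a :=
      triadic_exponent_le (n := a - 3 ^ e a) (by omega) (by omega)
    rw [le_antisymm hle hge] at hab h
    omega

/-- Counterexample to monotonicity (question (a) of Šalát and Tijdeman):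
there are a density measure `μ` and sets `A, B ⊆ ℕ` with `A(n) ≤ B(n)` for all
`n`, yet `μ(A) > μ(B)`. -/
theorem exists_densityMeasure_not_monotone :
    ∃ (μ : Set ℕ → ℝ) (A B : Set ℕ),
      IsDensityMeasure μ ∧ (∀ n : ℕ, count A n ≤ count B n) ∧ μ B < μ A := by
  obtain ⟨μ, hμ, hlim⟩ := exists_densityMeasure_tendsto_windowMean
  have hupper : μ upperTriadic = 1 :=
    tendsto_nhds_unique (hlim _) (tendsto_const_nhds.congr fun k =>
      (windowMean_of_window_subset (S := upperTriadic) fun _ hn => ⟨k, hn⟩).symm)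
  have hlower : μ lowerTriadic = 0 :=
    tendsto_nhds_unique (hlim _) (tendsto_const_nhds.congr fun k =>
      (windowMean_of_disjoint_window (disjoint_lowerTriadic_window k)).symm)
  refine ⟨μ, upperTriadic, lowerTriadic, hμ, count_upperTriadic_le, ?_⟩
  rw [hupper, hlower]
  exact zero_lt_one
end
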